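/- For all n ≥ 0: ∑_{k=0}^{n} (-1)^k·U(n,k)·((2k-1)!!)²/((2k+1)·4^k) = B_{2n}, where U(n,k) are the generalized Stirling numbers for weights w(m)=((2m+1)/2)² and B the Bernoulli numbers. -/

import Mathlib

/-- Generalized Stirling numbers of the second kind for the weights
w(m) = ((2m+1)/2)²: U(n,k) = U(n-1,k-1) + ((2k+1)/2)² U(n-1,k),
U(0,k)=[k=0], U(n,0) = (1/4)^n. -/
noncomputable def genStirlingU : ℕ → ℕ → ℚ
  | 0, 0 => 1
  | 0, _ + 1 => 0
  | n + 1, 0 => (1 / 4) * genStirlingU n 0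
  | n + 1, k + 1 => genStirlingU n k + ((2 * (k + 1) + 1) / 2 : ℚ) ^ 2 * genStirlingU n (k + 1)

/-- The odd double factorial (2k-1)!! = (2k)!/(2^k k!). -/
noncomputable def oddDoubleFactorial (k : ℕ) : ℚ :=
  ((2 * k).factorial : ℚ) / (2 ^ k * (k.factorial : ℚ))

/-!
Let `L` be the linear functional on `ℚ[X]` with `L (X ^ m) = B_m`. The Bernoulli recurrence says
`L (F (X + 1) - F (X)) = F' (0)`, so `L` is explicit on shifted falling factorials, which are finite
differences of falling factorials. The polynomial `∏_{i < k} (X ^ 2 - ((2 * i + 1) / 2) ^ 2)` is the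
falling factorial of length `2 * k` at `X + k - 1 / 2`; call it `P_k`. Since `P_k` is even,
`(2 * k + 1) * L (P_k) = P_k (0)`. The numbers `U (n, k)` are the coefficients of `X ^ (2 * n)` in
the basis `P_k` of the even polynomials, and applying `L` to that expansion gives the theorem.
-/

/-- Generalized Stirling numbers of the second kind with weights `w`: the coefficients of the powers
of an indeterminate in the Newton basis with nodes `w 0, w 1, …`. -/
def weightedStirling {R : Type*} [Semiring R] (w : ℕ → R) : ℕ → ℕ → R
  | 0, 0 => 1
  | 0, _ + 1 => 0
  | n + 1, 0 => w 0 * weightedStirling w n 0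
  | n + 1, k + 1 => weightedStirling w n k + w (k + 1) * weightedStirling w n (k + 1)

lemma weightedStirling_eq_zero_of_lt {R : Type*} [Semiring R] (w : ℕ → R) {n k : ℕ} (h : n < k) :
    weightedStirling w n k = 0 := by
  induction n generalizing k with
  | zero =>
    obtain ⟨k, rfl⟩ := Nat.exists_eq_add_one.mpr h
    rfl
  | succ n ih =>
    obtain ⟨k, rfl⟩ := Nat.exists_eq_add_one.mpr (Nat.zero_lt_of_lt h)
    simp [weightedStirling, ih (Nat.lt_of_succ_lt_succ h), ih (Nat.lt_of_succ_lt h)]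

theorem pow_eq_sum_weightedStirling {R A : Type*} [CommRing R] [CommRing A] [Algebra R A]
    (w : ℕ → R) (x : A) (n : ℕ) :
    x ^ n = ∑ k ∈ Finset.range (n + 1),
      weightedStirling w n k • ∏ i ∈ Finset.range k, (x - algebraMap R A (w i)) := by
  induction n with
  | zero => simp [weightedStirling]
  | succ n ih =>
    set N : ℕ → A := fun k ↦ ∏ i ∈ Finset.range k, (x - algebraMap R A (w i)) with hN
    have mul_newton (k : ℕ) : x * N k = N (k + 1) + w k • N k := by
      simp only [hN, Finset.prod_range_succ, Algebra.smul_def]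
      ring
    have top_term_eq_zero : (w (n + 1) * weightedStirling w n (n + 1)) • N (n + 1) = 0 := by
      rw [weightedStirling_eq_zero_of_lt w n.lt_succ_self, mul_zero, zero_smul]
    calc x ^ (n + 1)
        = ∑ k ∈ Finset.range (n + 1), weightedStirling w n k • N (k + 1) +
            ∑ k ∈ Finset.range (n + 1), (w k * weightedStirling w n k) • N k := by
          rw [pow_succ', ih, Finset.mul_sum, ← Finset.sum_add_distrib]
          refine Finset.sum_congr rfl fun k _ ↦ ?_
          rw [mul_smul_comm, mul_newton, smul_add, smul_smul, mul_comm (w k)]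
      _ = ∑ k ∈ Finset.range (n + 1), weightedStirling w n k • N (k + 1) +
            ∑ k ∈ Finset.range (n + 2), (w k * weightedStirling w n k) • N k := by
          rw [Finset.sum_range_succ _ (n + 1), top_term_eq_zero, add_zero]
      _ = ∑ k ∈ Finset.range (n + 2), weightedStirling w (n + 1) k • N k := by
          rw [Finset.sum_range_succ' _ (n + 1), Finset.sum_range_succ' _ (n + 1), ← add_assoc,
            ← Finset.sum_add_distrib]
          simp only [weightedStirling, add_smul]

section DescPochhammer

open Polynomial

variable {R : Type*} [CommRing R]

lemma descPochhammer_succ_comp_X_add_C_right (n : ℕ) (a : R) :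
    (descPochhammer R (n + 1)).comp (X + C a) =
      (descPochhammer R n).comp (X + C a) * (X + C (a - n)) := by
  rw [descPochhammer_succ_right, mul_comp, sub_comp, X_comp, natCast_comp, C_sub, C_eq_natCast,
    add_sub_assoc]

lemma descPochhammer_succ_comp_X_add_C_left (n : ℕ) (a : R) :
    (descPochhammer R (n + 1)).comp (X + C (a + 1)) =
      (X + C (a + 1)) * (descPochhammer R n).comp (X + C a) := by
  rw [descPochhammer_succ_left, mul_comp, X_comp, comp_assoc, sub_comp, X_comp, one_comp, C_add,
    C_1, ← add_assoc, add_sub_cancel_right]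

lemma descPochhammer_succ_comp_X_add_C_add_one_sub (n : ℕ) (a : R) :
    (descPochhammer R (n + 1)).comp (X + C (a + 1)) - (descPochhammer R (n + 1)).comp (X + C a) =
      (n + 1 : R) • (descPochhammer R n).comp (X + C a) := by
  rw [descPochhammer_succ_comp_X_add_C_left, descPochhammer_succ_comp_X_add_C_right, smul_eq_C_mul]
  simp only [C_add, C_sub]
  ring

end DescPochhammer

section BernoulliFunctional

open Polynomial

/-- The Bernoulli umbra: the linear functional on `ℚ[X]` sending `X ^ m` to the Bernoulli number
`B_m`, with the convention `B_1 = -1 / 2`. -/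
noncomputable def bernoulliFunctional : ℚ[X] →ₗ[ℚ] ℚ :=
  (basisMonomials ℚ).constr ℚ _root_.bernoulli

lemma bernoulliFunctional_X_pow (m : ℕ) : bernoulliFunctional (X ^ m) = _root_.bernoulli m := by
  rw [← monomial_one_right_eq_X_pow, bernoulliFunctional]
  simpa using (basisMonomials ℚ).constr_basis ℚ _root_.bernoulli m

lemma bernoulliFunctional_X_add_one_pow_sub (m : ℕ) :
    bernoulliFunctional ((X + 1) ^ m - X ^ m) = (derivative (X ^ m : ℚ[X])).eval 0 := by
  have binomial_expansion :
      ((X + 1) ^ m - X ^ m : ℚ[X]) = ∑ k ∈ Finset.range m, (m.choose k : ℚ) • X ^ k := by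
    rw [add_pow, Finset.sum_range_succ]
    simp [smul_eq_C_mul, mul_comm]
  rw [binomial_expansion, map_sum]
  simp only [map_smul, bernoulliFunctional_X_pow, smul_eq_mul]
  rw [_root_.sum_bernoulli]
  rcases m with _ | _ | m <;> simp

theorem bernoulliFunctional_comp_X_add_one_sub (F : ℚ[X]) :
    bernoulliFunctional (F.comp (X + 1) - F) = (derivative F).eval 0 := by
  induction F using Polynomial.induction_on' with
  | add p q hp hq =>
    rw [add_comp, add_sub_add_comm, map_add, hp, hq, derivative_add, eval_add]
  | monomial m a =>
    rw [← smul_X_eq_monomial, smul_comp, X_pow_comp, ← smul_sub, map_smul,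
      bernoulliFunctional_X_add_one_pow_sub, derivative_smul, eval_smul]

theorem add_one_mul_bernoulliFunctional_descPochhammer_comp (n : ℕ) (a : ℚ) :
    (n + 1) * bernoulliFunctional ((descPochhammer ℚ n).comp (X + C a)) =
      (derivative (descPochhammer ℚ (n + 1))).eval a := by
  have shift_comp : (X + C a).comp (X + 1) = X + C (a + 1) := by
    rw [add_comp, X_comp, C_comp, C_add, C_1, add_right_comm, add_assoc]
  rw [← smul_eq_mul, ← map_smul, ← descPochhammer_succ_comp_X_add_C_add_one_sub, ← shift_comp,
    ← comp_assoc, bernoulliFunctional_comp_X_add_one_sub]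
  simp [derivative_comp]

end BernoulliFunctional

section CentralFactorial

open Polynomial

/-- The weights `w(m) = ((2m+1)/2)²` of `genStirlingU`. -/
def halfOddSq (m : ℕ) : ℚ := ((2 * m + 1) / 2) ^ 2

lemma genStirlingU_eq_weightedStirling (n k : ℕ) :
    genStirlingU n k = weightedStirling halfOddSq n k := by
  induction n generalizing k with
  | zero => cases k <;> rfl
  | succ n ih =>
    cases k <;> simp only [genStirlingU, weightedStirling, halfOddSq, ih] <;> norm_num

/-- The even central factorial with half-integer roots, `∏_{i < k} (X² - ((2i+1)/2)²)`: the Newton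
basis for the weights `halfOddSq`, evaluated at `X²`. -/
noncomputable def centralFactorial (k : ℕ) : ℚ[X] :=
  ∏ i ∈ Finset.range k, (X ^ 2 - C (halfOddSq i))

lemma X_pow_two_mul_eq_sum_centralFactorial (n : ℕ) :
    (X ^ (2 * n) : ℚ[X]) =
      ∑ k ∈ Finset.range (n + 1), genStirlingU n k • centralFactorial k := by
  simp only [pow_mul, genStirlingU_eq_weightedStirling, centralFactorial]
  exact pow_eq_sum_weightedStirling halfOddSq (X ^ 2 : ℚ[X]) n

lemma centralFactorial_eq_descPochhammer_comp (k : ℕ) :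
    centralFactorial k = (descPochhammer ℚ (2 * k)).comp (X + C (k - 1 / 2 : ℚ)) := by
  induction k with
  | zero => simp [centralFactorial]
  | succ k ih =>
    have quadratic_factor : (X ^ 2 - C (halfOddSq k) : ℚ[X]) =
        (X + C (k - 1 / 2 + 1 : ℚ)) * (X + C (k - 1 / 2 - (2 * k : ℕ) : ℚ)) := by
      have h_opposite : (k - 1 / 2 - (2 * k : ℕ) : ℚ) = -(k - 1 / 2 + 1) := by push_cast; ring
      rw [halfOddSq, h_opposite, show ((2 * k + 1) / 2 : ℚ) = k - 1 / 2 + 1 by ring, C_pow, C_neg]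
      ring
    have shift_succ : ((k + 1 : ℕ) - 1 / 2 : ℚ) = k - 1 / 2 + 1 := by push_cast; ring
    rw [mul_add_one, shift_succ, descPochhammer_succ_comp_X_add_C_left,
      descPochhammer_succ_comp_X_add_C_right, ← ih, centralFactorial, Finset.prod_range_succ,
      ← centralFactorial, quadratic_factor]
    ring

lemma derivative_centralFactorial_eval_zero (k : ℕ) :
    (derivative (centralFactorial k)).eval 0 = 0 := by
  have even : centralFactorial k =
      (∏ i ∈ Finset.range k, (X - C (halfOddSq i))).comp (X ^ 2) := by
    simp [centralFactorial, prod_comp]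
  simp [even, derivative_comp]

lemma derivative_descPochhammer_two_mul_add_one_eval (k : ℕ) :
    (derivative (descPochhammer ℚ (2 * k + 1))).eval (k - 1 / 2 : ℚ) =
      (centralFactorial k).eval 0 := by
  have h := congrArg (fun p : ℚ[X] ↦ (derivative p).eval 0)
    (descPochhammer_succ_comp_X_add_C_right (2 * k) (k - 1 / 2 : ℚ))
  rw [← centralFactorial_eq_descPochhammer_comp] at h
  simpa [derivative_comp, derivative_centralFactorial_eval_zero] using h

lemma two_mul_add_one_mul_bernoulliFunctional_centralFactorial (k : ℕ) :
    (2 * k + 1) * bernoulliFunctional (centralFactorial k) = (centralFactorial k).eval 0 := by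
  rw [← derivative_descPochhammer_two_mul_add_one_eval,
    ← add_one_mul_bernoulliFunctional_descPochhammer_comp,
    centralFactorial_eq_descPochhammer_comp]
  push_cast
  rfl

lemma oddDoubleFactorial_succ (k : ℕ) :
    oddDoubleFactorial (k + 1) = (2 * k + 1) * oddDoubleFactorial k := by
  simp only [oddDoubleFactorial, mul_add_one, Nat.factorial_succ]
  push_cast
  field_simp
  ring

lemma centralFactorial_eval_zero (k : ℕ) :
    (centralFactorial k).eval 0 = (-1) ^ k * oddDoubleFactorial k ^ 2 / 4 ^ k := by
  induction k with
  | zero => simp [centralFactorial, oddDoubleFactorial]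
  | succ k ih =>
    rw [centralFactorial, Finset.prod_range_succ, ← centralFactorial, eval_mul, ih,
      oddDoubleFactorial_succ]
    simp only [halfOddSq, eval_sub, eval_pow, eval_X, eval_C]
    ring

lemma bernoulliFunctional_centralFactorial (k : ℕ) :
    bernoulliFunctional (centralFactorial k) =
      (-1) ^ k * oddDoubleFactorial k ^ 2 / ((2 * k + 1) * 4 ^ k) := by
  rw [mul_comm (2 * k + 1 : ℚ), ← div_div, ← centralFactorial_eval_zero,
    eq_div_iff (by positivity), mul_comm,
    two_mul_add_one_mul_bernoulliFunctional_centralFactorial]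

end CentralFactorial

theorem sum_genStirlingU_bernoulli (n : ℕ) :
    ∑ k ∈ Finset.range (n + 1),
        (-1 : ℚ) ^ k * genStirlingU n k * (oddDoubleFactorial k) ^ 2 /
          ((2 * k + 1) * 4 ^ k) =
      bernoulli (2 * n) := by
  rw [← bernoulliFunctional_X_pow, X_pow_two_mul_eq_sum_centralFactorial, map_sum]
  refine Finset.sum_congr rfl fun k _ ↦ ?_
  rw [map_smul, smul_eq_mul, bernoulliFunctional_centralFactorial]
  ring
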